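/- arXiv:2412.16839 — 3 statements merged into one kernel-verified Lean document; each statement's English description precedes it below -/
import Mathlib

section
/- Let n be a natural number with n(n−1)(n²−n+2)/8 + 1 < n! (which holds for all n > 3). Then there exists a bipartite graph in the many-to-many setting for which no mapping into the plane exactly preserves the distance orders. Precisely: there exist a finite set X with n elements, a finite set Y, and edge weights w : Y → X → ℝ with, for each y ∈ Y, the values w y x (x ∈ X) pairwise distinct, such that for every pair of maps p : X → ℝ² and q : Y → ℝ² there exist y ∈ Y and x₁, x₂ ∈ X with w y x₁ < w y x₂ but not dist(p x₁, q y) < dist(p x₂, q y). -/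
/-!
Let `Y` be the set of all permutations of the `n` points, so that every linear order of the
neighbors is prescribed by some `y`. The hypothesis on `n` forces `4 ≤ n`, so any images
`p 0, …, p (n - 1)` in the plane have a nontrivial affine dependence `∑ c i = 0`, `∑ c i • p i = 0`.
Expanding the square, `∑ c i * dist (p i) z ^ 2 = ∑ c i * ‖p i‖ ^ 2` does not depend on `z`
(`sum_mul_dist_sq`). If `z` orders the points as the coefficients `c` do, this sum is positive by
Chebyshev's sum inequality (`sum_mul_pos`); if `z` orders them as `-c` does, it is negative.
Hence both orders cannot be realized by points of the plane.
-/

/-- More than three points of the plane are affinely dependent. -/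
lemma exists_affine_dependence {n : ℕ} (hn : 4 ≤ n) (p : Fin n → EuclideanSpace ℝ (Fin 2)) :
    ∃ c : Fin n → ℝ, c ≠ 0 ∧ ∑ i, c i = 0 ∧ ∑ i, c i • p i = 0 := by
  let L : (Fin n → ℝ) →ₗ[ℝ] EuclideanSpace ℝ (Fin 2) × ℝ :=
    Fintype.linearCombination ℝ (fun i => (p i, (1 : ℝ)))
  have hL : LinearMap.ker L ≠ ⊥ := by
    apply LinearMap.ker_ne_bot_of_finrank_lt
    simp
    omega
  obtain ⟨c, hc, hc0⟩ := Submodule.exists_mem_ne_zero_of_ne_bot hL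
  have h : ∑ i, c i • (p i, (1 : ℝ)) = 0 := by
    simpa [L, Fintype.linearCombination_apply] using hc
  refine ⟨c, hc0, ?_, ?_⟩
  · simpa [Prod.snd_sum] using congrArg Prod.snd h
  · simpa [Prod.fst_sum] using congrArg Prod.fst h

/-- For an affine dependence `c` of the points `p i`, the weighted sum of squared distances to `z`
is independent of `z`. -/
lemma sum_mul_dist_sq {n : ℕ} {p : Fin n → EuclideanSpace ℝ (Fin 2)} {c : Fin n → ℝ}
    (h0 : ∑ i, c i = 0) (h1 : ∑ i, c i • p i = 0) (z : EuclideanSpace ℝ (Fin 2)) :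
    ∑ i, c i * dist (p i) z ^ 2 = ∑ i, c i * ‖p i‖ ^ 2 := by
  have h2 : ∑ i, c i * inner ℝ (p i) z = 0 := by
    simpa [sum_inner, real_inner_smul_left] using congrArg (fun v => inner ℝ v z) h1
  calc ∑ i, c i * dist (p i) z ^ 2
      = ∑ i, (c i * ‖p i‖ ^ 2 - 2 * (c i * inner ℝ (p i) z) + c i * ‖z‖ ^ 2) := by
        refine Finset.sum_congr rfl fun i _ => ?_
        rw [dist_eq_norm, norm_sub_sq_real]
        ring
    _ = ∑ i, c i * ‖p i‖ ^ 2 := by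
        rw [Finset.sum_add_distrib, Finset.sum_sub_distrib, ← Finset.mul_sum, ← Finset.sum_mul,
          h0, h2]
        ring

/-- A strict form of Chebyshev's sum inequality for weights with zero sum. -/
lemma sum_mul_pos {n : ℕ} {c f : Fin n → ℝ} (hc : c ≠ 0) (h0 : ∑ i, c i = 0)
    (hf : ∀ i j, c i < c j → f i < f j) : 0 < ∑ i, c i * f i := by
  obtain ⟨k, hk⟩ := Function.ne_iff.mp hc
  obtain ⟨j, -, hj⟩ := Finset.exists_pos_of_sum_zero_of_exists_nonzero c h0
    ⟨k, Finset.mem_univ k, hk⟩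
  obtain ⟨i, -, hi⟩ := Finset.exists_pos_of_sum_zero_of_exists_nonzero (fun i => -c i)
    (by simp [h0]) ⟨k, Finset.mem_univ k, neg_ne_zero.mpr hk⟩
  have hij : c i < c j := by linarith
  have hnonneg : ∀ a b, 0 ≤ (c a - c b) * (f a - f b) := by
    intro a b
    rcases lt_trichotomy (c a) (c b) with h | h | h
    · exact mul_nonneg_of_nonpos_of_nonpos (by linarith) (by linarith [hf a b h])
    · simp [h]
    · exact mul_nonneg (by linarith) (by linarith [hf b a h])
  have hpos : 0 < ∑ a, ∑ b, (c a - c b) * (f a - f b) := by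
    refine Finset.sum_pos' (fun a _ => Finset.sum_nonneg fun b _ => hnonneg a b)
      ⟨i, Finset.mem_univ i, Finset.sum_pos' (fun b _ => hnonneg i b) ⟨j, Finset.mem_univ j, ?_⟩⟩
    exact mul_pos_of_neg_of_neg (by linarith) (by linarith [hf i j hij])
  have hinner : ∀ a, ∑ b, (c a - c b) * (f a - f b)
      = n * (c a * f a) - c a * ∑ b, f b + ∑ b, c b * f b := by
    intro a
    calc ∑ b, (c a - c b) * (f a - f b)
        = ∑ b, (c a * f a - c a * f b - c b * f a + c b * f b) :=
          Finset.sum_congr rfl fun b _ => by ring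
      _ = _ := by
          rw [Finset.sum_add_distrib, Finset.sum_sub_distrib, Finset.sum_sub_distrib,
            ← Finset.mul_sum, ← Finset.sum_mul, h0]
          simp [← Finset.mul_sum]
          ring
  have heq : ∑ a, ∑ b, (c a - c b) * (f a - f b) = 2 * n * ∑ a, c a * f a := by
    simp_rw [hinner]
    rw [Finset.sum_add_distrib, Finset.sum_sub_distrib, ← Finset.mul_sum, ← Finset.sum_mul, h0]
    simp
    ring
  rw [heq] at hpos
  exact pos_of_mul_pos_right hpos (by positivity)


/-- In the many-to-many setting, if `n(n-1)(n²-n+2)/8 + 1 < n!` then there is a bipartite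
graph with `|X| = n` for which no mapping of `X` and `Y` into the plane exactly preserves
all the distance orders of the neighbors of the points of `Y`. -/
theorem many_to_many_no_order_preserving_embedding
    (n : ℕ) (hn : n * (n - 1) * (n ^ 2 - n + 2) / 8 + 1 < Nat.factorial n) :
    ∃ (Y : Type) (_ : Fintype Y) (w : Y → Fin n → ℝ),
      (∀ y : Y, Function.Injective (w y)) ∧
      ∀ (p : Fin n → EuclideanSpace ℝ (Fin 2)) (q : Y → EuclideanSpace ℝ (Fin 2)),
        ∃ (y : Y) (x₁ x₂ : Fin n),
          w y x₁ < w y x₂ ∧ ¬ dist (p x₁) (q y) < dist (p x₂) (q y) := by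
  have h4 : 4 ≤ n := by
    by_contra h
    have h3 : n < 4 := by omega
    interval_cases n <;> simp [Nat.factorial] at hn
  refine ⟨Equiv.Perm (Fin n), inferInstance, fun y x => ((y x : ℕ) : ℝ), ?_, ?_⟩
  · intro y a b hab
    exact y.injective (Fin.ext (Nat.cast_injective hab))
  intro p q
  by_contra! hcon
  obtain ⟨c, hc, h0, h1⟩ := exists_affine_dependence h4 p
  -- The inverse of a sorting permutation of `d` is a vertex prescribing the order of `d`.
  have key : ∀ d : Fin n → ℝ, ∃ y, ∀ i j, d i < d j →
      dist (p i) (q y) ^ 2 < dist (p j) (q y) ^ 2 := by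
    intro d
    refine ⟨(Tuple.sort d).symm, fun i j hij => ?_⟩
    have hlt : (Tuple.sort d).symm i < (Tuple.sort d).symm j := by
      by_contra! hle
      have := Tuple.monotone_sort d hle
      simp only [Function.comp_apply, Equiv.apply_symm_apply] at this
      linarith
    exact pow_lt_pow_left₀ (hcon _ i j (by exact_mod_cast hlt)) dist_nonneg two_ne_zero
  obtain ⟨y, hy⟩ := key c
  obtain ⟨y', hy'⟩ := key (-c)
  have hpos := sum_mul_pos hc h0 hy
  have hneg := sum_mul_pos (neg_ne_zero.mpr hc) (by simp [h0]) hy'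
  simp only [Pi.neg_apply, neg_mul, Finset.sum_neg_distrib] at hneg
  rw [sum_mul_dist_sq h0 h1] at hpos hneg
  linarith
end

section
/- Any finite set of m affine lines in the Euclidean plane ℝ² divides the plane into at most m(m+1)/2 + 1 regions; that is, if L₁, …, L_m are one-dimensional affine subspaces of ℝ², then the complement ℝ² \ (L₁ ∪ ⋯ ∪ L_m) has at most m(m+1)/2 + 1 connected components. -/
/-!
Write each line as the zero set of a nonconstant affine function `f i`. A *cell* is the set of
points at which every `f i` has a prescribed strict sign. Cells are convex, so two points of the
complement with the same sign pattern lie in the same connected component, and it suffices to bound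
the number of sign patterns that are realized.

For a convex set `C`, let `N(C, f)` be the number of sign patterns realized by points of `C`.
Adding one function `g` to the family `f` gives `N(C, (g, f)) ≤ N(C, f) + N(C ∩ {g = 0}, f)`
(`ncard_patterns_succ_le`): a pattern of `f` is counted twice only if its cell in `C` meets both
`{g > 0}` and `{g < 0}`, and then by convexity it meets `{g = 0}`. Since a subsingleton realizes at
most one pattern, induction gives at most `m + 1` patterns on a line
(`ncard_patterns_le_of_collinear`), and a second induction gives at most `m (m + 1) / 2 + 1`
patterns on the plane (`ncard_patterns_univ_le`).
-/

namespace LineArrangement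

variable {E : Type*} [AddCommGroup E] [Module ℝ E]

/-- The open half-line of positive reals (`true`) or of negative reals (`false`). -/
def half (b : Bool) : Set ℝ := cond b (Set.Ioi 0) (Set.Iio 0)

lemma convex_half (b : Bool) : Convex ℝ (half b) := by
  cases b
  · exact convex_Iio 0
  · exact convex_Ioi 0

/-- The points at which each `f i` has the strict sign prescribed by `s i`. -/
def cell {m : ℕ} (f : Fin m → E →ᵃ[ℝ] ℝ) (s : Fin m → Bool) : Set E :=
  {x | ∀ i, f i x ∈ half (s i)}

lemma convex_cell {m : ℕ} (f : Fin m → E →ᵃ[ℝ] ℝ) (s : Fin m → Bool) : Convex ℝ (cell f s) := by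
  have h : cell f s = ⋂ i, f i ⁻¹' half (s i) := by
    ext x
    simp [cell]
  rw [h]
  exact convex_iInter fun i => (convex_half (s i)).affine_preimage (f i)

/-- The sign patterns realized by `f` at points of `C`; points where some `f i` vanishes realize
none. -/
def patterns {m : ℕ} (C : Set E) (f : Fin m → E →ᵃ[ℝ] ℝ) : Set (Fin m → Bool) :=
  {s | (C ∩ cell f s).Nonempty}

lemma half_unique {a b : Bool} {r : ℝ} (ha : r ∈ half a) (hb : r ∈ half b) : a = b := by
  cases a <;> cases b <;> simp [half] at ha hb ⊢ <;> linarith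

lemma ncard_patterns_le_one {m : ℕ} {C : Set E} (hC : C.Subsingleton)
    (f : Fin m → E →ᵃ[ℝ] ℝ) : (patterns C f).ncard ≤ 1 := by
  rw [Set.ncard_le_one (Set.toFinite _)]
  rintro s ⟨x, hx, hxs⟩ t ⟨y, hy, hyt⟩
  obtain rfl := hC hx hy
  exact funext fun i => half_unique (hxs i) (hyt i)

/-- The recursion behind the count: the patterns of the tail that extend in two ways are realized
on the zero set of `f 0`. -/
lemma ncard_patterns_succ_le {m : ℕ} {C : Set E} (hC : Convex ℝ C)
    (f : Fin (m + 1) → E →ᵃ[ℝ] ℝ) :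
    (patterns C f).ncard ≤ (patterns C (fun i => f i.succ)).ncard +
      (patterns (C ∩ {x | f 0 x = 0}) (fun i => f i.succ)).ncard := by
  set A : Set (Fin m → Bool) := {t | (Fin.cons true t : Fin (m + 1) → Bool) ∈ patterns C f} with hA
  set B : Set (Fin m → Bool) := {t | (Fin.cons false t : Fin (m + 1) → Bool) ∈ patterns C f} with hB
  have hsub : patterns C f ⊆ (fun t => (Fin.cons true t : Fin (m + 1) → Bool)) '' A ∪
      (fun t => (Fin.cons false t : Fin (m + 1) → Bool)) '' B := by
    intro s hs
    rw [← Fin.cons_self_tail s] at hs ⊢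
    cases h : s 0
    · rw [h] at hs
      exact Or.inr ⟨_, hs, rfl⟩
    · rw [h] at hs
      exact Or.inl ⟨_, hs, rfl⟩
  have hunion : A ∪ B ⊆ patterns C (fun i => f i.succ) := by
    rintro t (⟨x, hx, hxt⟩ | ⟨x, hx, hxt⟩)
    · exact ⟨x, hx, fun i => by simpa using hxt i.succ⟩
    · exact ⟨x, hx, fun i => by simpa using hxt i.succ⟩
  have hinter : A ∩ B ⊆ patterns (C ∩ {x | f 0 x = 0}) (fun i => f i.succ) := by
    rintro t ⟨⟨x, hx, hxt⟩, ⟨y, hy, hyt⟩⟩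
    have h0x : 0 < f 0 x := hxt 0
    have h0y : f 0 y < 0 := hyt 0
    have hz : (0 : ℝ) ∈ f 0 '' segment ℝ y x := by
      rw [image_segment, segment_eq_uIcc]
      exact Set.mem_uIcc.2 (Or.inl ⟨h0y.le, h0x.le⟩)
    obtain ⟨z, hz, hz0⟩ := hz
    refine ⟨z, ⟨hC.segment_subset hy hx hz, hz0⟩, ?_⟩
    refine (convex_cell (fun i => f i.succ) t).segment_subset ?_ ?_ hz
    · exact fun i => by simpa using hyt i.succ
    · exact fun i => by simpa using hxt i.succ
  calc (patterns C f).ncard ≤ _ := Set.ncard_le_ncard hsub (Set.toFinite _)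
    _ ≤ _ := Set.ncard_union_le _ _
    _ ≤ A.ncard + B.ncard :=
        add_le_add (Set.ncard_image_le (Set.toFinite _)) (Set.ncard_image_le (Set.toFinite _))
    _ = (A ∪ B).ncard + (A ∩ B).ncard := (Set.ncard_union_add_ncard_inter A B).symm
    _ ≤ _ := add_le_add (Set.ncard_le_ncard hunion (Set.toFinite _))
        (Set.ncard_le_ncard hinter (Set.toFinite _))

lemma ncard_patterns_le_of_collinear {C : Set E} (hC : Convex ℝ C)
    (hline : ∀ x ∈ C, ∀ y ∈ C, x ≠ y → ∀ z ∈ C, ∃ c : ℝ, z = AffineMap.lineMap x y c) :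
    ∀ {m : ℕ} (f : Fin m → E →ᵃ[ℝ] ℝ), (patterns C f).ncard ≤ m + 1
  | 0, f => by
    rw [Set.ncard_le_one (Set.toFinite _)]
    exact fun s _ t _ => Subsingleton.elim s t
  | m + 1, f => by
    by_cases hs : (C ∩ {x | f 0 x = 0}).Subsingleton
    · have h1 := ncard_patterns_succ_le hC f
      have h2 := ncard_patterns_le_one hs (fun i => f i.succ)
      have h3 := ncard_patterns_le_of_collinear hC hline (fun i => f i.succ)
      omega
    · -- With two distinct zeros on the line, `f 0` vanishes on `C` and no pattern is realized.
      obtain ⟨x, ⟨hx, hx0⟩, y, ⟨hy, hy0⟩, hxy⟩ := Set.not_subsingleton_iff.1 hs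
      have hempty : patterns C f = ∅ := by
        refine Set.eq_empty_of_forall_notMem ?_
        rintro s ⟨z, hz, hzs⟩
        obtain ⟨c, rfl⟩ := hline x hx y hy hxy z hz
        have h := hzs 0
        rw [AffineMap.apply_lineMap, show f 0 x = 0 from hx0, show f 0 y = 0 from hy0] at h
        cases hb : s 0 <;> simp [hb, half] at h
      simp [hempty]

lemma ncard_patterns_univ_le :
    ∀ {m : ℕ} (f : Fin m → E →ᵃ[ℝ] ℝ)
      (_ : ∀ i, ∀ x y, f i x = 0 → f i y = 0 → x ≠ y → ∀ z, f i z = 0 →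
        ∃ c : ℝ, z = AffineMap.lineMap x y c),
      (patterns Set.univ f).ncard ≤ m * (m + 1) / 2 + 1
  | 0, f, _ => by
    rw [Set.ncard_le_one (Set.toFinite _)]
    exact fun s _ t _ => Subsingleton.elim s t
  | m + 1, f, hf => by
    have h1 := ncard_patterns_succ_le convex_univ f
    have h2 := ncard_patterns_univ_le (fun i => f i.succ) fun i => hf i.succ
    have h3 : (patterns (Set.univ ∩ {x | f 0 x = 0}) (fun i => f i.succ)).ncard ≤ m + 1 := by
      rw [Set.univ_inter]
      refine ncard_patterns_le_of_collinear ?_ ?_ _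
      · exact (convex_singleton (0 : ℝ)).affine_preimage (f 0)
      · exact fun x hx y hy hxy z hz => hf 0 x y hx hy hxy z hz
    have h4 : (m + 1) * (m + 1 + 1) = m * (m + 1) + (m + 1) * 2 := by ring
    rw [h4, Nat.add_mul_div_right _ _ (by norm_num)]
    omega

/-- A line in the plane is the zero set of an affine function. -/
lemma exists_affineMap_of_line (L : AffineSubspace ℝ (EuclideanSpace ℝ (Fin 2)))
    (hL : Module.finrank ℝ L.direction = 1) :
    ∃ f : EuclideanSpace ℝ (Fin 2) →ᵃ[ℝ] ℝ, ∀ x, x ∈ L ↔ f x = 0 := by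
  have hne : (L : Set (EuclideanSpace ℝ (Fin 2))).Nonempty := by
    rw [Set.nonempty_iff_ne_empty]
    intro h
    rw [AffineSubspace.coe_eq_bot_iff] at h
    rw [h, AffineSubspace.direction_bot, finrank_bot] at hL
    omega
  obtain ⟨p, hp⟩ := hne
  have hlt : L.direction < ⊤ := by
    rw [lt_top_iff_ne_top]
    intro h
    rw [h, finrank_top, finrank_euclideanSpace_fin] at hL
    omega
  obtain ⟨l, hl0, hl⟩ := Submodule.exists_le_ker_of_lt_top _ hlt
  have hker : L.direction = LinearMap.ker l := by
    apply Submodule.eq_of_le_of_finrank_le hl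
    have h1 : LinearMap.ker l ≠ ⊤ := fun h => hl0 (LinearMap.ker_eq_top.1 h)
    have h2 := Submodule.finrank_lt h1
    simp at h2
    omega
  refine ⟨l.toAffineMap - AffineMap.const ℝ _ (l p), fun x => ?_⟩
  rw [← AffineSubspace.vsub_right_mem_direction_iff_mem hp, hker]
  simp

lemma eq_lineMap_of_mem_line {L : AffineSubspace ℝ E} (hL : Module.finrank ℝ L.direction = 1)
    {x y z : E} (hx : x ∈ L) (hy : y ∈ L) (hz : z ∈ L) (hxy : x ≠ y) :
    ∃ c : ℝ, z = AffineMap.lineMap x y c := by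
  have hv : (⟨y - x, AffineSubspace.vsub_mem_direction hy hx⟩ : L.direction) ≠ 0 := by
    intro h
    exact hxy (sub_eq_zero.1 (congrArg Subtype.val h)).symm
  obtain ⟨c, hc⟩ := (finrank_eq_one_iff_of_nonzero' _ hv).1 hL
    ⟨z - x, AffineSubspace.vsub_mem_direction hz hx⟩
  refine ⟨c, ?_⟩
  have hc' : c • (y - x) = z - x := congrArg Subtype.val hc
  simp [AffineMap.lineMap_apply, hc']

end LineArrangement

open LineArrangement

/-- `m` affine lines divide the Euclidean plane into at most `m(m+1)/2 + 1` regions: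
the complement of their union has at most `m(m+1)/2 + 1` connected components. -/
theorem lines_divide_plane_regions
    (m : ℕ) (L : Fin m → AffineSubspace ℝ (EuclideanSpace ℝ (Fin 2)))
    (hL : ∀ i, Module.finrank ℝ (L i).direction = 1) :
    Finite (ConnectedComponents ↥((⋃ i, (L i : Set (EuclideanSpace ℝ (Fin 2))))ᶜ)) ∧
    Nat.card (ConnectedComponents ↥((⋃ i, (L i : Set (EuclideanSpace ℝ (Fin 2))))ᶜ))
      ≤ m * (m + 1) / 2 + 1 := by
  choose f hf using fun i => exists_affineMap_of_line (L i) (hL i)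
  set U : Set (EuclideanSpace ℝ (Fin 2)) :=
    (⋃ i, (L i : Set (EuclideanSpace ℝ (Fin 2))))ᶜ with hU
  have hmem : ∀ x, x ∈ U ↔ ∀ i, f i x ≠ 0 := by
    intro x
    simp [hU, hf]
  have hcellU : ∀ s, cell f s ⊆ U := by
    intro s x hx
    rw [hmem]
    intro i h0
    have h := hx i
    rw [h0] at h
    cases hb : s i <;> simp [hb, half] at h
  have hpat : ∀ x : U, ∃ s, (x : EuclideanSpace ℝ (Fin 2)) ∈ cell f s := by
    intro x
    refine ⟨fun i => decide (0 < f i x), fun i => ?_⟩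
    rcases lt_or_gt_of_ne ((hmem x).1 x.2 i) with h | h
    · simpa [half, h.not_gt] using h
    · simp [half, h]
  choose s hs using hpat
  have hcomp : ∀ x y : U, s x = s y →
      (x : ConnectedComponents U) = (y : ConnectedComponents U) := by
    intro x y hxy
    have hpre : IsPreconnected ((↑) ⁻¹' cell f (s x) : Set U) := by
      rw [← Topology.IsInducing.subtypeVal.isPreconnected_image, Subtype.image_preimage_coe,
        Set.inter_eq_right.2 (hcellU _)]
      exact (convex_cell f (s x)).isPreconnected
    refine ConnectedComponents.coe_eq_coe'.2 (hpre.subset_connectedComponent ?_ ?_)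
    · exact hxy ▸ hs y
    · exact hs x
  -- Injectivity into the realized patterns uses one chosen point in each component.
  let F : ConnectedComponents U → patterns Set.univ f :=
    fun c => ⟨s (Quotient.out c), _, Set.mem_univ _, hs _⟩
  have hF : Function.Injective F := by
    intro c d hcd
    have h := hcomp _ _ (congrArg Subtype.val hcd)
    exact (Quotient.out_eq c).symm.trans (h.trans (Quotient.out_eq d))
  refine ⟨Finite.of_injective F hF, (Nat.card_le_card_of_injective F hF).trans ?_⟩
  rw [Nat.card_coe_set_eq]
  refine ncard_patterns_univ_le f fun i x y hx hy hxy z hz => ?_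
  exact eq_lineMap_of_mem_line (hL i) ((hf i x).2 hx) ((hf i y).2 hy) ((hf i z).2 hz) hxy
end

section
/- Let X be a finite set of points in the Euclidean plane ℝ², and let B be the union over all pairs of distinct points a, b ∈ X of the perpendicular bisectors {z ∈ ℝ² : dist(z, a) = dist(z, b)}. If two points y and y′ lie in the same connected component of ℝ² \ B, then for all a, b ∈ X one has dist(y, a) < dist(y, b) if and only if dist(y′, a) < dist(y′, b); that is, y and y′ induce the same distance order on X. -/
/-!
For distinct `a, b ∈ X`, the continuous functions `z ↦ dist z a` and `z ↦ dist z b` agree only on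
the perpendicular bisector of `a` and `b`, hence nowhere in `Bᶜ`. If the order of the two distances
differed at two points of one component of `Bᶜ`, the intermediate value theorem on that
(preconnected) component would produce a point of it at which they agree.
-/

/-- The order between two continuous real functions that never agree on a preconnected set is
constant along that set, by the intermediate value theorem. -/
theorem lt_of_lt_of_isPreconnected_of_ne {α : Type*} [TopologicalSpace α] {C : Set α}
    (hC : IsPreconnected C) {f g : α → ℝ} (hf : Continuous f) (hg : Continuous g)
    (hne : ∀ z ∈ C, f z ≠ g z) {y y' : α} (hy : y ∈ C) (hy' : y' ∈ C) (h : f y < g y) :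
    f y' < g y' := by
  by_contra! h'
  obtain ⟨z, hz, e⟩ :=
    hC.intermediate_value₂ hy hy' hf.continuousOn hg.continuousOn h.le h'
  exact hne z hz e

/-- If two points of the plane lie in the same connected component of the complement of
the union of the perpendicular bisectors of pairs of distinct points of a finite set `X`,
then they induce the same distance order on `X`. -/
theorem same_component_same_distance_order
    (X : Finset (EuclideanSpace ℝ (Fin 2)))
    (B : Set (EuclideanSpace ℝ (Fin 2)))
    (hB : B = ⋃ a ∈ X, ⋃ b ∈ X, ⋃ _ : a ≠ b,
        {z : EuclideanSpace ℝ (Fin 2) | dist z a = dist z b})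
    (y y' : EuclideanSpace ℝ (Fin 2))
    (hy : y ∈ Bᶜ) (hy' : y' ∈ connectedComponentIn Bᶜ y) :
    ∀ a ∈ X, ∀ b ∈ X, (dist y a < dist y b ↔ dist y' a < dist y' b) := by
  intro a ha b hb
  rcases eq_or_ne a b with rfl | hab
  · simp
  have hC : IsPreconnected (connectedComponentIn Bᶜ y) := isPreconnected_connectedComponentIn
  have hyC : y ∈ connectedComponentIn Bᶜ y := mem_connectedComponentIn hy
  have hne : ∀ z ∈ connectedComponentIn Bᶜ y, dist z a ≠ dist z b := by
    intro z hz e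
    apply connectedComponentIn_subset _ _ hz
    rw [hB]
    simp only [Set.mem_iUnion]
    exact ⟨a, ha, b, hb, hab, e⟩
  have hfa : Continuous fun z : EuclideanSpace ℝ (Fin 2) => dist z a := by fun_prop
  have hfb : Continuous fun z : EuclideanSpace ℝ (Fin 2) => dist z b := by fun_prop
  exact ⟨lt_of_lt_of_isPreconnected_of_ne hC hfa hfb hne hyC hy',
    lt_of_lt_of_isPreconnected_of_ne hC hfa hfb hne hy' hyC⟩
end
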